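/- arXiv:1807.00719 — 3 statements merged into one kernel-verified Lean document; each statement's English description precedes it below -/
import Mathlib

section
/- Let σ² > 0 and Py > 0 be real numbers and let μ be a probability measure on ℝ that is absolutely continuous with respect to the Gaussian measure gaussianReal 0 σ², such that the function y ↦ y² is integrable with respect to μ with ∫ y² dμ(y) = Py. Then the Kullback–Leibler divergence satisfies klDiv μ (gaussianReal 0 σ²) ≥ ENNReal.ofReal ((1/2) * (Py/σ² - 1 + Real.log (σ²/Py))), with equality when μ = gaussianReal 0 Py. In other words, among all distributions on ℝ with second moment Py, the zero-mean Gaussian with variance Py minimizes the KL divergence to the zero-mean Gaussian with variance σ². -/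
open MeasureTheory ProbabilityTheory
open scoped ENNReal NNReal Classical

/-- Kullback–Leibler divergence of `μ` from `ν`: `∫ log (dμ/dν) dμ` when `μ ≪ ν` and the
log-likelihood ratio is `μ`-integrable, and `∞` otherwise. -/
noncomputable def klDiv {α : Type*} [MeasurableSpace α] (μ ν : Measure α) : ℝ≥0∞ :=
  if μ ≪ ν ∧ Integrable (llr μ ν) μ then ENNReal.ofReal (∫ x, llr μ ν x ∂μ) else ⊤

/-- Chain rule for log-likelihood ratios. -/
theorem llr_add_llr_ae_eq {α : Type*} [MeasurableSpace α] {μ ν κ : Measure α}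
    [SigmaFinite μ] [SigmaFinite ν] [SigmaFinite κ] (hμν : μ ≪ ν) (hνκ : ν ≪ κ) :
    llr μ κ =ᵐ[μ] fun x => llr μ ν x + llr ν κ x := by
  have hμκ := hμν.trans hνκ
  filter_upwards [hμκ.ae_le (Measure.rnDeriv_mul_rnDeriv (κ := κ) hμν),
    Measure.rnDeriv_pos hμν, hμν.ae_le (Measure.rnDeriv_lt_top μ ν),
    hμν.ae_le (Measure.rnDeriv_pos hνκ), hμκ.ae_le (Measure.rnDeriv_lt_top ν κ)]
    with x hx hμpos hμtop hνpos hνtop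
  rw [llr, llr, llr, ← hx, Pi.mul_apply, ENNReal.toReal_mul,
    Real.log_mul (ENNReal.toReal_pos hμpos.ne' hμtop.ne).ne'
      (ENNReal.toReal_pos hνpos.ne' hνtop.ne).ne']

/-- Gibbs' inequality for probability measures. -/
theorem integral_llr_nonneg {α : Type*} [MeasurableSpace α] {μ ν : Measure α}
    [IsProbabilityMeasure μ] [IsProbabilityMeasure ν] (hμν : μ ≪ ν)
    (hint : Integrable (llr μ ν) μ) : 0 ≤ ∫ x, llr μ ν x ∂μ := by
  simpa using InformationTheory.integral_llr_add_sub_measure_univ_nonneg hμν hint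

theorem gaussianReal_absolutelyContinuous_gaussianReal (m₁ m₂ : ℝ) {v w : ℝ≥0}
    (hv : v ≠ 0) (hw : w ≠ 0) : gaussianReal m₁ v ≪ gaussianReal m₂ w :=
  (gaussianReal_absolutelyContinuous m₁ hv).trans (gaussianReal_absolutelyContinuous' m₂ hw)

theorem log_gaussianPDFReal (m : ℝ) {v : ℝ≥0} (hv : v ≠ 0) (x : ℝ) :
    Real.log (gaussianPDFReal m v x) =
      -(Real.log (2 * Real.pi) + Real.log v) / 2 - (x - m) ^ 2 / (2 * v) := by
  have hv' : (0 : ℝ) < v := by exact_mod_cast pos_iff_ne_zero.2 hv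
  have hpi := Real.pi_pos
  rw [gaussianPDFReal, Real.log_mul (by positivity) (by positivity), Real.log_inv,
    Real.log_sqrt (by positivity), Real.log_mul (by positivity) hv'.ne', Real.log_exp]
  ring

theorem llr_gaussianReal_ae_eq {v w : ℝ≥0} (hv : v ≠ 0) (hw : w ≠ 0) :
    llr (gaussianReal 0 v) (gaussianReal 0 w) =ᵐ[volume]
      fun x => (1 / 2) * Real.log ((w : ℝ) / v) + (1 / (2 * w) - 1 / (2 * v)) * x ^ 2 := by
  filter_upwards [(gaussianReal_absolutelyContinuous' 0 hw).ae_le (Measure.rnDeriv_eq_div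
    (gaussianReal_absolutelyContinuous 0 hv) (gaussianReal_absolutelyContinuous 0 hw)),
    rnDeriv_gaussianReal 0 v, rnDeriv_gaussianReal 0 w] with x hx hxv hxw
  have hv' : (v : ℝ) ≠ 0 := by exact_mod_cast hv
  have hw' : (w : ℝ) ≠ 0 := by exact_mod_cast hw
  rw [llr, hx, hxv, hxw, ENNReal.toReal_div, toReal_gaussianPDF, toReal_gaussianPDF,
    Real.log_div (gaussianPDFReal_pos 0 v x hv).ne' (gaussianPDFReal_pos 0 w x hw).ne',
    log_gaussianPDFReal 0 hv, log_gaussianPDFReal 0 hw, Real.log_div hw' hv']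
  ring

theorem integrable_sq_gaussianReal (m : ℝ) (v : ℝ≥0) :
    Integrable (fun x : ℝ => x ^ 2) (gaussianReal m v) :=
  (memLp_id_gaussianReal 2).integrable_sq

theorem integral_sq_gaussianReal_zero (v : ℝ≥0) : ∫ x, x ^ 2 ∂gaussianReal 0 v = v := by
  have h := variance_fun_id_gaussianReal (μ := 0) (v := v)
  rw [variance_eq_integral measurable_id'.aemeasurable] at h
  simpa using h

theorem integrable_llr_gaussianReal {v w : ℝ≥0} (hv : v ≠ 0) (hw : w ≠ 0)
    {μ : Measure ℝ} [IsProbabilityMeasure μ] (hμ : μ ≪ volume)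
    (hint : Integrable (fun y : ℝ => y ^ 2) μ) :
    Integrable (llr (gaussianReal 0 v) (gaussianReal 0 w)) μ := by
  rw [integrable_congr (hμ.ae_le (llr_gaussianReal_ae_eq hv hw))]
  exact (integrable_const _).add (hint.const_mul _)

theorem integral_llr_gaussianReal {v w : ℝ≥0} (hv : v ≠ 0) (hw : w ≠ 0)
    {μ : Measure ℝ} [IsProbabilityMeasure μ] (hμ : μ ≪ volume)
    (hint : Integrable (fun y : ℝ => y ^ 2) μ) (hmom : ∫ y, y ^ 2 ∂μ = v) :
    ∫ x, llr (gaussianReal 0 v) (gaussianReal 0 w) x ∂μ =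
      (1 / 2) * ((v : ℝ) / w - 1 + Real.log ((w : ℝ) / v)) := by
  have hv' : (v : ℝ) ≠ 0 := by exact_mod_cast hv
  have hw' : (w : ℝ) ≠ 0 := by exact_mod_cast hw
  rw [integral_congr_ae (hμ.ae_le (llr_gaussianReal_ae_eq hv hw)),
    integral_add (integrable_const _) (hint.const_mul _), integral_const, integral_const_mul, hmom]
  simp only [probReal_univ, one_smul]
  field_simp
  ring

/-- Among all distributions on `ℝ` with second moment `Py`, the zero-mean Gaussian with
variance `Py` minimizes the KL divergence to the zero-mean Gaussian with variance `σ2`. -/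
theorem stmt_0 (σ2 Py : ℝ≥0) (hσ : 0 < σ2) (hPy : 0 < Py)
    (μ : Measure ℝ) [IsProbabilityMeasure μ]
    (hac : μ ≪ gaussianReal 0 σ2)
    (hint : Integrable (fun y : ℝ => y ^ 2) μ)
    (hmom : ∫ y, y ^ 2 ∂μ = (Py : ℝ)) :
    ENNReal.ofReal ((1/2) * ((Py : ℝ) / (σ2 : ℝ) - 1 + Real.log ((σ2 : ℝ) / (Py : ℝ)))) ≤
        klDiv μ (gaussianReal 0 σ2) ∧
      klDiv (gaussianReal 0 Py) (gaussianReal 0 σ2) =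
        ENNReal.ofReal ((1/2) * ((Py : ℝ) / (σ2 : ℝ) - 1 + Real.log ((σ2 : ℝ) / (Py : ℝ)))) := by
  have hvol := hac.trans (gaussianReal_absolutelyContinuous 0 hσ.ne')
  have hPσ := gaussianReal_absolutelyContinuous_gaussianReal 0 0 hPy.ne' hσ.ne'
  have hμP := hvol.trans (gaussianReal_absolutelyContinuous' 0 hPy.ne')
  constructor
  · rw [klDiv]
    split_ifs with h
    · apply ENNReal.ofReal_le_ofReal
      have hchain := llr_add_llr_ae_eq hμP hPσ
      have hG := integrable_llr_gaussianReal hPy.ne' hσ.ne' hvol hint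
      have hμPint : Integrable (llr μ (gaussianReal 0 Py)) μ := by
        refine (h.2.sub hG).congr ?_
        filter_upwards [hchain] with x hx
        simp [hx]
      rw [integral_congr_ae hchain, integral_add hμPint hG,
        integral_llr_gaussianReal hPy.ne' hσ.ne' hvol hint hmom]
      exact le_add_of_nonneg_left (integral_llr_nonneg hμP hμPint)
    · exact le_top
  · have hPvol := gaussianReal_absolutelyContinuous 0 hPy.ne'
    have hsq := integrable_sq_gaussianReal 0 Py
    rw [klDiv, if_pos ⟨hPσ, integrable_llr_gaussianReal hPy.ne' hσ.ne' hPvol hsq⟩,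
      integral_llr_gaussianReal hPy.ne' hσ.ne' hPvol hsq (integral_sq_gaussianReal_zero Py)]
end

section
/- Let σ² > 0 and Py ≥ σ² be real numbers. Then klDiv (gaussianReal 0 σ²) (gaussianReal 0 Py) ≤ klDiv (gaussianReal 0 Py) (gaussianReal 0 σ²); moreover the inequality is strict whenever Py > σ². Equivalently, (1/2)(σ²/Py - 1 + log(Py/σ²)) ≤ (1/2)(Py/σ² - 1 + log(σ²/Py)) for Py ≥ σ², with strict inequality for Py > σ². -/
open MeasureTheory ProbabilityTheory
open scoped ENNReal NNReal Classical

theorem llr_gaussianReal_zero_ae_eq {a b : ℝ≥0} (ha : a ≠ 0) (hb : b ≠ 0) :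
    llr (gaussianReal 0 a) (gaussianReal 0 b) =ᵐ[gaussianReal 0 a]
      fun x ↦ (1 / 2) * Real.log ((b : ℝ) / a) + (1 / (2 * b) - 1 / (2 * a)) * x ^ 2 := by
  refine (gaussianReal_absolutelyContinuous 0 ha).ae_eq ?_
  have hr := Measure.rnDeriv_withDensity_right (gaussianReal 0 a) volume
    (measurable_gaussianPDF 0 b).aemeasurable
    (ae_of_all _ fun x ↦ (gaussianPDF_pos 0 hb x).ne')
    (ae_of_all _ fun x ↦ gaussianPDF_ne_top)
  rw [← gaussianReal_of_var_ne_zero 0 hb] at hr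
  filter_upwards [hr, rnDeriv_gaussianReal 0 a] with x hx hxa
  have ha' : (0 : ℝ) < a := by positivity
  have hb' : (0 : ℝ) < b := by positivity
  have hπ := Real.pi_pos
  rw [llr, hx, hxa, ENNReal.toReal_mul, ENNReal.toReal_inv, toReal_gaussianPDF,
    toReal_gaussianPDF, Real.log_mul (inv_ne_zero (gaussianPDFReal_pos 0 b x hb).ne')
      (gaussianPDFReal_pos 0 a x ha).ne', Real.log_inv]
  simp only [gaussianPDFReal]
  rw [Real.log_mul (by positivity) (by positivity), Real.log_mul (by positivity) (by positivity),
    Real.log_exp, Real.log_exp, Real.log_inv, Real.log_inv, Real.log_sqrt (by positivity),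
    Real.log_sqrt (by positivity), Real.log_mul (by positivity) hb'.ne',
    Real.log_mul (by positivity) ha'.ne', Real.log_div hb'.ne' ha'.ne']
  ring

theorem klDiv_gaussianReal_zero {a b : ℝ≥0} (ha : a ≠ 0) (hb : b ≠ 0) :
    klDiv (gaussianReal 0 a) (gaussianReal 0 b) =
      ENNReal.ofReal ((1 / 2) * ((a : ℝ) / b - 1 + Real.log ((b : ℝ) / a))) := by
  have hllr := llr_gaussianReal_zero_ae_eq ha hb
  have hsq : Integrable (fun x : ℝ ↦ (1 / (2 * (b : ℝ)) - 1 / (2 * a)) * x ^ 2)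
      (gaussianReal 0 a) :=
    (memLp_id_gaussianReal' 2 (by simp)).integrable_sq.const_mul _
  have hac : gaussianReal 0 a ≪ gaussianReal 0 b :=
    (gaussianReal_absolutelyContinuous 0 ha).trans (gaussianReal_absolutelyContinuous' 0 hb)
  rw [klDiv, if_pos ⟨hac, (((integrable_const _).add hsq).congr hllr.symm)⟩,
    integral_congr_ae hllr, integral_add (integrable_const _) hsq, integral_const, integral_const_mul,
    integral_sq_gaussianReal_zero]
  have ha' : (a : ℝ) ≠ 0 := by exact_mod_cast ha
  have hb' : (b : ℝ) ≠ 0 := by exact_mod_cast hb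
  congr 1
  rw [probReal_univ, one_smul]
  field_simp
  ring

theorem gaussian_kl_lt_swap {a b : ℝ} (ha : 0 < a) (hab : a < b) :
    (1 / 2) * (a / b - 1 + Real.log (b / a)) < (1 / 2) * (b / a - 1 + Real.log (a / b)) := by
  have hb := ha.trans hab
  have h := Real.self_lt_sinh_iff.2 (Real.log_pos ((one_lt_div ha).2 hab))
  rw [Real.sinh_log (by positivity), inv_div] at h
  rw [← inv_div b a, Real.log_inv, inv_div]
  linarith

/-- Proposition 2: `D(p₀‖p₁) ≤ D(p₁‖p₀)` for the Gaussians `p₀ = N(0, σ²)`, `p₁ = N(0, Py)`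
with `Py ≥ σ²`, with strict inequality for `Py > σ²`. -/
theorem stmt_8 (σ2 Py : ℝ≥0) (hσ : 0 < σ2) (hle : σ2 ≤ Py) :
    klDiv (gaussianReal 0 σ2) (gaussianReal 0 Py) ≤
        klDiv (gaussianReal 0 Py) (gaussianReal 0 σ2) ∧
      (σ2 < Py → klDiv (gaussianReal 0 σ2) (gaussianReal 0 Py) <
        klDiv (gaussianReal 0 Py) (gaussianReal 0 σ2)) ∧
      (1/2) * ((σ2 : ℝ) / (Py : ℝ) - 1 + Real.log ((Py : ℝ) / (σ2 : ℝ))) ≤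
        (1/2) * ((Py : ℝ) / (σ2 : ℝ) - 1 + Real.log ((σ2 : ℝ) / (Py : ℝ))) ∧
      (σ2 < Py → (1/2) * ((σ2 : ℝ) / (Py : ℝ) - 1 + Real.log ((Py : ℝ) / (σ2 : ℝ))) <
        (1/2) * ((Py : ℝ) / (σ2 : ℝ) - 1 + Real.log ((σ2 : ℝ) / (Py : ℝ)))) := by
  have ha : (0 : ℝ) < σ2 := by exact_mod_cast hσ
  have hP : 0 < Py := hσ.trans_le hle
  have hlt : σ2 < Py → (1/2) * ((σ2 : ℝ) / (Py : ℝ) - 1 + Real.log ((Py : ℝ) / (σ2 : ℝ))) <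
      (1/2) * ((Py : ℝ) / (σ2 : ℝ) - 1 + Real.log ((σ2 : ℝ) / (Py : ℝ))) :=
    fun h ↦ gaussian_kl_lt_swap ha (by exact_mod_cast h)
  have hle' : (1/2) * ((σ2 : ℝ) / (Py : ℝ) - 1 + Real.log ((Py : ℝ) / (σ2 : ℝ))) ≤
      (1/2) * ((Py : ℝ) / (σ2 : ℝ) - 1 + Real.log ((σ2 : ℝ) / (Py : ℝ))) := by
    rcases hle.eq_or_lt with rfl | h
    · exact le_rfl
    · exact (hlt h).le
  rw [klDiv_gaussianReal_zero hσ.ne' hP.ne', klDiv_gaussianReal_zero hP.ne' hσ.ne']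
  refine ⟨ENNReal.ofReal_le_ofReal hle', fun h ↦ ?_, hle', hlt⟩
  refine (ENNReal.ofReal_lt_ofReal_iff_of_nonneg ?_).2 (hlt h)
  have hlog := Real.one_sub_inv_le_log_of_pos (show (0 : ℝ) < (Py : ℝ) / σ2 by positivity)
  rw [inv_div] at hlog
  linarith
end

section
/- Let σ² and Py be real numbers with 0 < σ² < Py. Then there do not exist real numbers a and b such that for all y : ℝ, gaussianPDFReal 0 σ² y = (a + b * y²) * gaussianPDFReal 0 Py y. That is, the likelihood ratio p₀(y)/p₁(y) of the two zero-mean Gaussian densities with distinct variances cannot be written in the form a + b·y². -/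
open MeasureTheory ProbabilityTheory
open scoped ENNReal NNReal

/-- Along the points `√n`, a centred Gaussian density is a geometric sequence. -/
lemma gaussianPDFReal_zero_sqrt_natCast (v : ℝ≥0) (n : ℕ) :
    gaussianPDFReal 0 v (Real.sqrt n) =
      gaussianPDFReal 0 v 0 * Real.exp (-(2 * (v : ℝ))⁻¹) ^ n := by
  rw [← Real.exp_nat_mul]
  simp only [gaussianPDFReal, sub_zero, Real.sq_sqrt n.cast_nonneg]
  simp [div_eq_mul_inv]

/-- The likelihood ratio `p₀(y)/p₁(y)` of two zero-mean Gaussian densities with distinct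
variances `σ² < Py` cannot be written in the form `a + b·y²`. -/
theorem stmt_12 (σ2 Py : ℝ≥0) (hσ : 0 < σ2) (hlt : σ2 < Py) :
    ¬ ∃ a b : ℝ, ∀ y : ℝ,
      gaussianPDFReal 0 σ2 y = (a + b * y ^ 2) * gaussianPDFReal 0 Py y := by
  rintro ⟨a, b, h⟩
  have h_sqrt (n : ℕ) := h (Real.sqrt n)
  simp only [gaussianPDFReal_zero_sqrt_natCast, Real.sq_sqrt (Nat.cast_nonneg _)] at h_sqrt
  have h0 := h_sqrt 0
  have h1 := h_sqrt 1
  have h2 := h_sqrt 2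
  have hpos := gaussianPDFReal_pos 0 σ2 0 hσ.ne'
  set p := gaussianPDFReal 0 σ2 0
  set q := gaussianPDFReal 0 Py 0
  set r := Real.exp (-(2 * (σ2 : ℝ))⁻¹) with hr
  set s := Real.exp (-(2 * (Py : ℝ))⁻¹) with hs
  push_cast at h0 h1 h2
  -- The second difference of `a + b * n` vanishes, which forces the two ratios to agree.
  have hsq : p * (r - s) ^ 2 = 0 := by
    linear_combination s ^ 2 * h0 - 2 * s * h1 + h2
  have hrs : r = s := by
    simpa [hpos.ne', sub_eq_zero] using hsq
  rw [hr, hs, Real.exp_eq_exp, neg_inj, inv_inj] at hrs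
  have hlt' : (σ2 : ℝ) < Py := by exact_mod_cast hlt
  linarith
end
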